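/- Let W ⊂ C([0,T],ℝⁿ) be a relatively compact set of continuous functions with φ(0) = 0 for all φ ∈ W. Then for every ε > 0 there exists h* > 0 such that for all h ∈ (0, h*], all φ ∈ W, and all t ∈ [0,T], ‖∫₀^{t/h} φ(t − τh) p_α(τ) dτ − φ(t)‖ ≤ ε. -/

import Mathlib

open MeasureTheory Set Real RealInnerProductSpace

noncomputable section

abbrev Evec (n : ℕ) := EuclideanSpace ℝ (Fin n)

/-- Generalized binomial coefficient `binom a j`. -/
def binomR (a : ℝ) (j : ℕ) : ℝ :=
  (∏ i ∈ Finset.range j, (a - (i : ℝ))) / (Nat.factorial j : ℝ)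

/-- Left-sided Riemann–Liouville fractional integral of order `α` with base point `0`. -/
def RLint {E : Type*} [NormedAddCommGroup E] [NormedSpace ℝ E]
    (α : ℝ) (f : ℝ → E) (t : ℝ) : E :=
  (Real.Gamma α)⁻¹ • ∫ τ in (0:ℝ)..t, ((t - τ) ^ (α - 1) : ℝ) • f τ

/-- Left-sided Riemann–Liouville fractional derivative of order `α` with base point `0`. -/
def RLderiv {E : Type*} [NormedAddCommGroup E] [NormedSpace ℝ E]
    (α : ℝ) (x : ℝ → E) (t : ℝ) : E :=
  deriv (fun s => (Real.Gamma (1 - α))⁻¹ • ∫ τ in (0:ℝ)..s, ((s - τ) ^ (-α) : ℝ) • x τ) t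

/-- Caputo fractional derivative of order `α` with base point `0`. -/
def CapDeriv {E : Type*} [NormedAddCommGroup E] [NormedSpace ℝ E]
    (α : ℝ) (x : ℝ → E) (t : ℝ) : E :=
  RLderiv α (fun s => x s - x 0) t

/-- Grünwald–Letnikov fractional difference of order `α` with step `h`. -/
def GLdiff {E : Type*} [NormedAddCommGroup E] [NormedSpace ℝ E]
    (α h : ℝ) (x : ℝ → E) (t : ℝ) : E :=
  ∑ j ∈ Finset.range (⌊t / h⌋₊ + 1), ((-1 : ℝ) ^ j * binomR α j) • x (t - (j : ℝ) * h)

/-- The kernel `p_α`. -/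
def pker (α : ℝ) (τ : ℝ) : ℝ :=
  (Real.Gamma α)⁻¹ * ∑ j ∈ Finset.range ⌈τ⌉₊, (-1 : ℝ) ^ j * binomR α j * ((τ - (j : ℝ)) ^ (α - 1) : ℝ)

/-- Mittag-Leffler function `E_α`. -/
def mittagLeffler (α z : ℝ) : ℝ := ∑' k : ℕ, z ^ k / Real.Gamma (α * (k : ℝ) + 1)

/-- `x` is a solution of the Caputo Cauchy problem `(^C D^α x)(t) = f(t, x(t))`, `x 0 = x₀`. -/
def IsCaputoSol (α T : ℝ) {n : ℕ} (f : ℝ → Evec n → Evec n) (x₀ : Evec n)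
    (x : ℝ → Evec n) : Prop :=
  (∃ φ : ℝ → Evec n, Measurable φ ∧
    (∃ C : ℝ, ∀ᵐ t ∂volume.restrict (Icc (0:ℝ) T), ‖φ t‖ ≤ C) ∧
    ∀ t ∈ Icc (0:ℝ) T, x t = x₀ + RLint α φ t) ∧
  ∀ᵐ t ∂volume.restrict (Icc (0:ℝ) T), CapDeriv α x t = f t (x t)

/-- `y` is a solution of the approximating retarded functional-differential Cauchy problem. -/
def IsApproxSol (α T h : ℝ) {n : ℕ} (f : ℝ → Evec n → Evec n) (x₀ : Evec n)
    (y : ℝ → Evec n) : Prop :=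
  (∃ Ly : NNReal, LipschitzOnWith Ly y (Icc (0:ℝ) T)) ∧ y 0 = 0 ∧
  ∀ᵐ t ∂volume.restrict (Icc (0:ℝ) T),
    HasDerivAt y (f t (x₀ + ((h ^ (α - 1) : ℝ)) • GLdiff (1 - α) h y t)) t

/-- `x` is a motion of the conflict-controlled Caputo system for realizations `u`, `v`. -/
def IsCtrlSol (α T : ℝ) {n nu nv : ℕ}
    (g : ℝ → Evec n → Evec nu → Evec nv → Evec n) (x₀ : Evec n)
    (u : ℝ → Evec nu) (v : ℝ → Evec nv) (x : ℝ → Evec n) : Prop :=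
  (∃ φ : ℝ → Evec n, Measurable φ ∧
    (∃ C : ℝ, ∀ᵐ t ∂volume.restrict (Icc (0:ℝ) T), ‖φ t‖ ≤ C) ∧
    ∀ t ∈ Icc (0:ℝ) T, x t = x₀ + RLint α φ t) ∧
  ∀ᵐ t ∂volume.restrict (Icc (0:ℝ) T), CapDeriv α x t = g t (x t) (u t) (v t)

/-- `y` is a motion of the approximating conflict-controlled system for realizations `ũ`, `ṽ`. -/
def IsCtrlApproxSol (α T h : ℝ) {n nu nv : ℕ}
    (g : ℝ → Evec n → Evec nu → Evec nv → Evec n) (x₀ : Evec n)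
    (ut : ℝ → Evec nu) (vt : ℝ → Evec nv) (y : ℝ → Evec n) : Prop :=
  (∃ Ly : NNReal, LipschitzOnWith Ly y (Icc (0:ℝ) T)) ∧ y 0 = 0 ∧
  ∀ᵐ t ∂volume.restrict (Icc (0:ℝ) T),
    HasDerivAt y (g t (x₀ + ((h ^ (α - 1) : ℝ)) • GLdiff (1 - α) h y t) (ut t) (vt t)) t

/-!
Let `k(τ) = τ ^ (α - 1) / Γ(α)` and let `c j = (-1) ^ j * binom α j` be the coefficients of
`(1 - z) ^ α`, so that `p_α(τ) = ∑ c j * k(τ - j)`. Replace `k` by the step function `S` whose value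
on `(m, m + 1]` is the `m`-th coefficient of `(1 - z) ^ (-α)`: the same combination of translates of
`S` is the indicator of `(0, 1]`, because `(1 - z) ^ α * (1 - z) ^ (-α) = 1`. The difference
`E = k - S` is `O(τ ^ (α - 2))` at infinity, hence integrable, and `∑ c j = 0` converges absolutely.
So `p_α = 1_(0,1] + ∑ c j * E(· - j)` is integrable with integral `1 + 0 * ∫ E = 1`.

Since `φ 0 = 0`, the integral over `(0, t / h)` is the integral over `(0, ∞)` of
`p_α(τ) φ(max 0 (t - τ h))`, so the error is the integral of
`p_α(τ) (φ(max 0 (t - τ h)) - φ(t))`. Dominated convergence applies, with equicontinuity making the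
integrand tend to `0` as `h → 0` uniformly in `φ` and `t`.
-/

open Filter Topology
open Ring (multichoose)

section Multichoose

lemma sum_range_succ_multichoose {R : Type*} [Ring R] [BinomialRing R] (r : R) (n : ℕ) :
    ∑ j ∈ Finset.range (n + 1), multichoose r j = multichoose (r + 1) n := by
  induction n with
  | zero => simp
  | succ n ih => rw [Finset.sum_range_succ, ih, Ring.multichoose_succ_succ, add_comm]

lemma multichoose_eq_negOnePow_smul_choose_neg {R : Type*} [Ring R] [BinomialRing R] (r : R)
    (n : ℕ) : multichoose r n = Int.negOnePow n • Ring.choose (-r) n := by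
  rw [Ring.choose_neg', smul_smul, ← Int.negOnePow_add, Int.negOnePow_even _ ⟨n, rfl⟩, one_smul]

lemma sum_range_succ_multichoose_mul {R : Type*} [CommRing R] [BinomialRing R] (r s : R)
    (n : ℕ) :
    ∑ j ∈ Finset.range (n + 1), multichoose r j * multichoose s (n - j) =
      multichoose (r + s) n := by
  simp_rw [multichoose_eq_negOnePow_smul_choose_neg]
  rw [neg_add, Ring.add_choose_eq n (Commute.all _ _),
    Finset.Nat.sum_antidiagonal_eq_sum_range_succ
      fun i j => Ring.choose (-r) i * Ring.choose (-s) j,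
    Finset.smul_sum]
  refine Finset.sum_congr rfl fun j hj => ?_
  rw [smul_mul_smul_comm, ← Int.negOnePow_add, ← Nat.cast_add,
    Nat.add_sub_of_le (Finset.mem_range_succ_iff.1 hj)]

lemma multichoose_eq_prod_div_factorial {K : Type*} [Field K] [CharZero K] [BinomialRing K] (r : K)
    (n : ℕ) :
    multichoose r n = (∏ i ∈ Finset.range n, (r + i)) / n.factorial := by
  rw [eq_div_iff (Nat.cast_ne_zero.2 n.factorial_ne_zero), mul_comm, ← nsmul_eq_mul,
    Ring.factorial_nsmul_multichoose_eq_ascPochhammer, Polynomial.ascPochhammer_smeval_eq_eval]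
  induction n with
  | zero => simp
  | succ n ih => rw [ascPochhammer_succ_eval, ih, Finset.prod_range_succ]

lemma neg_one_pow_mul_binomR (a : ℝ) (n : ℕ) : (-1) ^ n * binomR a n = multichoose (-a) n := by
  have hprod := Finset.prod_neg (s := Finset.range n) (f := fun i : ℕ => a - i)
  simp_rw [neg_sub', sub_neg_eq_add, Finset.card_range] at hprod
  rw [multichoose_eq_prod_div_factorial, binomR, ← mul_div_assoc, hprod]

lemma multichoose_succ_eq_div_mul {K : Type*} [Field K] [CharZero K] [BinomialRing K] (r : K)
    (n : ℕ) :
    multichoose r (n + 1) = r / (n + 1) * multichoose (r + 1) n := by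
  have shift (i : ℕ) : r + (i + 1 : ℕ) = r + 1 + i := by push_cast; ring
  simp_rw [multichoose_eq_prod_div_factorial, Finset.prod_range_succ', shift, Nat.factorial_succ]
  push_cast
  field_simp
  ring

lemma multichoose_nonneg {r : ℝ} (hr : 0 ≤ r) (n : ℕ) : 0 ≤ multichoose r n := by
  rw [multichoose_eq_prod_div_factorial]
  positivity

lemma multichoose_eq_Gamma_div {r : ℝ} (hr : 0 < r) (n : ℕ) :
    multichoose r n = (Gamma r)⁻¹ * (Gamma (n + r) / n.factorial) := by
  have hΓ : Gamma (n + r) = (∏ i ∈ Finset.range n, (r + i)) * Gamma r := by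
    induction n with
    | zero => simp
    | succ n ih =>
      rw [Finset.prod_range_succ, Nat.cast_succ, add_right_comm, Gamma_add_one (by positivity), ih]
      ring
  have := (Gamma_pos_of_pos hr).ne'
  rw [multichoose_eq_prod_div_factorial, hΓ]
  field_simp

end Multichoose

section GammaRatio

lemma Gamma_add_le_rpow_mul_Gamma {x s : ℝ} (hx : 0 < x) (hs : s ∈ Icc (0 : ℝ) 1) :
    Gamma (x + s) ≤ x ^ s * Gamma x := by
  have hΓ : 0 < Gamma x := Gamma_pos_of_pos hx
  rcases hs.1.eq_or_lt with rfl | hs0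
  · simp
  rcases hs.2.eq_or_lt with rfl | hs1
  · rw [Gamma_add_one hx.ne', rpow_one]
  calc Gamma (x + s) = Gamma ((1 - s) * x + s * (x + 1)) := by ring_nf
    _ ≤ Gamma x ^ (1 - s) * Gamma (x + 1) ^ s :=
      Gamma_mul_add_mul_le_rpow_Gamma_mul_rpow_Gamma hx (by positivity) (by linarith) hs0 (by ring)
    _ = x ^ s * (Gamma x ^ (1 - s) * Gamma x ^ s) := by
      rw [Gamma_add_one hx.ne', mul_rpow hx.le hΓ.le]
      ring
    _ = x ^ s * Gamma x := by rw [← rpow_add hΓ, sub_add_cancel, rpow_one]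

variable {s : ℝ}

lemma Gamma_nat_add_div_factorial_le_rpow (hs : s ∈ Icc (0 : ℝ) 1) {n : ℕ} (hn : n ≠ 0) :
    Gamma (n + s) / n.factorial ≤ (n : ℝ) ^ (s - 1) := by
  have hn0 : (0 : ℝ) < n := by positivity
  rw [← Gamma_nat_eq_factorial, Gamma_add_one hn0.ne', rpow_sub_one hn0.ne',
    div_le_div_iff₀ (mul_pos hn0 (Gamma_pos_of_pos hn0)) hn0]
  nlinarith [Gamma_add_le_rpow_mul_Gamma hn0 hs]

lemma rpow_le_Gamma_nat_add_div_factorial (hs0 : 0 < s) (hs1 : s ≤ 1) (n : ℕ) :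
    ((n : ℝ) + 1) ^ (s - 1) ≤ Gamma (n + s) / n.factorial := by
  have hns : 0 < n + s := by positivity
  have hfac : (n.factorial : ℝ) ≤ (n + 1) ^ (1 - s) * Gamma (n + s) :=
    calc (n.factorial : ℝ) = Gamma (n + s + (1 - s)) := by
          rw [← Gamma_nat_eq_factorial]
          ring_nf
      _ ≤ (n + s) ^ (1 - s) * Gamma (n + s) :=
          Gamma_add_le_rpow_mul_Gamma hns ⟨by linarith, by linarith⟩
      _ ≤ (n + 1) ^ (1 - s) * Gamma (n + s) := by
          have := (Gamma_pos_of_pos hns).le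
          gcongr
  rw [← neg_sub, rpow_neg (by positivity), le_div_iff₀ (by positivity),
    inv_mul_le_iff₀ (by positivity)]
  exact hfac

lemma rpow_sub_rpow_add_one_le {x : ℝ} (hx : 0 < x) (hs : 0 ≤ s) :
    x ^ (s - 1) - (x + 1) ^ (s - 1) ≤ x ^ (s - 2) := by
  have hmono : x ^ s / (x + 1) ≤ (x + 1) ^ (s - 1) := by
    rw [rpow_sub_one (by positivity)]
    gcongr
    linarith
  calc x ^ (s - 1) - (x + 1) ^ (s - 1) ≤ x ^ s / x - x ^ s / (x + 1) := by
        rw [rpow_sub_one hx.ne']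
        gcongr
    _ = x ^ s / (x * (x + 1)) := by field_simp; ring
    _ ≤ x ^ s / (x * x) := by gcongr; linarith
    _ = x ^ (s - 2) := by rw [rpow_sub hx, rpow_two, sq]

end GammaRatio

section Coefficients

lemma tendsto_multichoose_atTop_zero {r : ℝ} (hr : r ∈ Ioo (0 : ℝ) 1) :
    Tendsto (multichoose r) atTop (𝓝 0) := by
  have hdecay : Tendsto (fun n : ℕ => (Gamma r)⁻¹ * (n : ℝ) ^ (r - 1)) atTop (𝓝 0) := by
    have := (tendsto_rpow_neg_atTop (sub_pos.2 hr.2)).comp tendsto_natCast_atTop_atTop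
    simpa using this.const_mul (Gamma r)⁻¹
  refine squeeze_zero' (.of_forall (multichoose_nonneg hr.1.le)) ?_ hdecay
  filter_upwards [eventually_ne_atTop 0] with n hn
  have := (Gamma_pos_of_pos hr.1).le
  rw [multichoose_eq_Gamma_div hr.1]
  gcongr
  exact Gamma_nat_add_div_factorial_le_rpow ⟨hr.1.le, hr.2.le⟩ hn

variable {α : ℝ}

lemma multichoose_neg_succ_nonpos (hα : α ∈ Icc (0 : ℝ) 1) (n : ℕ) :
    multichoose (-α) (n + 1) ≤ 0 := by
  have hα0 := hα.1
  have := multichoose_nonneg (r := -α + 1) (by linarith [hα.2]) n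
  rw [multichoose_succ_eq_div_mul, neg_div, neg_mul, neg_nonpos]
  positivity

lemma summable_multichoose_neg (hα : α ∈ Icc (0 : ℝ) 1) : Summable (multichoose (-α)) := by
  rw [← summable_nat_add_iff 1, ← summable_neg_iff]
  refine summable_of_sum_range_le (c := 1)
    (fun n => neg_nonneg.2 (multichoose_neg_succ_nonpos hα n)) fun n => ?_
  have hsum := sum_range_succ_multichoose (-α) n
  rw [Finset.sum_range_succ', Ring.multichoose_zero_right] at hsum
  rw [Finset.sum_neg_distrib]
  linarith [multichoose_nonneg (r := -α + 1) (by linarith [hα.2]) n]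

lemma hasSum_multichoose_neg (hα : α ∈ Ioo (0 : ℝ) 1) : HasSum (multichoose (-α)) 0 := by
  have hs := (summable_multichoose_neg ⟨hα.1.le, hα.2.le⟩).hasSum
  have hpartial :
      Tendsto (fun n => ∑ j ∈ Finset.range (n + 1), multichoose (-α) j) atTop (𝓝 0) := by
    simp_rw [sum_range_succ_multichoose]
    exact tendsto_multichoose_atTop_zero ⟨by linarith [hα.2], by linarith [hα.1]⟩
  have := tendsto_nhds_unique ((tendsto_add_atTop_iff_nat 1).2 hs.tendsto_sum_nat) hpartial
  rwa [this] at hs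

end Coefficients

section Translates

variable {G ι E : Type*} [MeasurableSpace G] {μ : Measure G} [NormedAddCommGroup E]

lemma integrable_tsum_of_summable_integral_norm [Countable ι] [CompleteSpace E] {F : ι → G → E}
    (hF : ∀ i, Integrable (F i) μ) (hS : Summable fun i => ∫ x, ‖F i x‖ ∂μ) :
    Integrable (fun x => ∑' i, F i x) μ := by
  refine ⟨AEStronglyMeasurable.tsum fun i => (hF i).1, ?_⟩
  calc ∫⁻ x, ‖∑' i, F i x‖ₑ ∂μ ≤ ∫⁻ x, ∑' i, ‖F i x‖ₑ ∂μ :=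
        lintegral_mono fun x => enorm_tsum_le_tsum_enorm
    _ = ∑' i, ∫⁻ x, ‖F i x‖ₑ ∂μ := lintegral_tsum fun i => (hF i).1.enorm
    _ = ∑' i, ENNReal.ofReal (∫ x, ‖F i x‖ ∂μ) := by
        simp_rw [fun i => ofReal_integral_norm_eq_lintegral_enorm (hF i)]
    _ < ⊤ := hS.tsum_ofReal_lt_top

variable [AddGroup G] [MeasurableAdd G] [μ.IsAddRightInvariant] [NormedSpace ℝ E]
  {c : ι → ℝ} {f : G → E}

lemma summable_integral_norm_smul_comp_sub (hc : Summable c) (a : ι → G) (f : G → E) :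
    Summable fun i => ∫ x, ‖c i • f (x - a i)‖ ∂μ := by
  have hint (i : ι) : ∫ x, ‖c i • f (x - a i)‖ ∂μ = ‖c i‖ * ∫ x, ‖f x‖ ∂μ := by
    simp_rw [norm_smul, integral_const_mul]
    rw [integral_sub_right_eq_self fun x => ‖f x‖]
  simp_rw [hint]
  exact hc.norm.mul_right _

variable [Countable ι]

lemma integrable_tsum_smul_comp_sub [CompleteSpace E] (hc : Summable c) (a : ι → G)
    (hf : Integrable f μ) :
    Integrable (fun x => ∑' i, c i • f (x - a i)) μ :=
  integrable_tsum_of_summable_integral_norm (fun i => (hf.comp_sub_right (a i)).smul (c i))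
    (summable_integral_norm_smul_comp_sub hc a f)

lemma integral_tsum_smul_comp_sub (hc : Summable c) (a : ι → G) (hf : Integrable f μ) :
    ∫ x, ∑' i, c i • f (x - a i) ∂μ = (∑' i, c i) • ∫ x, f x ∂μ := by
  calc ∫ x, ∑' i, c i • f (x - a i) ∂μ = ∑' i, ∫ x, c i • f (x - a i) ∂μ :=
        (integral_tsum_of_summable_integral_norm (fun i => (hf.comp_sub_right (a i)).smul (c i))
          (summable_integral_norm_smul_comp_sub hc a f)).symm
    _ = ∑' i, c i • ∫ x, f x ∂μ :=
        tsum_congr fun i => by rw [integral_smul, integral_sub_right_eq_self f]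
    _ = (∑' i, c i) • ∫ x, f x ∂μ := hc.tsum_smul_const _

end Translates

section StepDefect

/-- The Riemann–Liouville kernel `τ ^ (α - 1) / Γ(α)` on `(0, ∞)` minus the step function whose
value on `(k, k + 1]` is `multichoose α k`, extended by `0` to `(-∞, 0]`. The step values are the
coefficients of the fractional difference of order `-α`, so the fractional difference of order `α`
turns the step function into the indicator of `(0, 1]`. -/
def stepDefect (α : ℝ) : ℝ → ℝ :=
  (Ioi 0).indicator fun τ => (Gamma α)⁻¹ * τ ^ (α - 1) - multichoose α (⌈τ⌉₊ - 1)

variable {α : ℝ}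

lemma stepDefect_of_nonpos {τ : ℝ} (hτ : τ ≤ 0) : stepDefect α τ = 0 :=
  indicator_of_notMem (notMem_Ioi.2 hτ) _

lemma stepDefect_of_mem_Ioc {τ : ℝ} {k : ℕ} (hτ : τ ∈ Ioc (k : ℝ) (k + 1)) :
    stepDefect α τ = (Gamma α)⁻¹ * τ ^ (α - 1) - multichoose α k := by
  have hceil : ⌈τ⌉₊ = k + 1 := (Nat.ceil_eq_iff k.succ_ne_zero).2 (by simpa using hτ)
  rw [stepDefect, indicator_of_mem (mem_Ioi.2 (k.cast_nonneg.trans_lt hτ.1)), hceil,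
    Nat.add_sub_cancel]

lemma measurable_stepDefect (α : ℝ) : Measurable (stepDefect α) := by
  have hstep : Measurable fun τ : ℝ => multichoose α (⌈τ⌉₊ - 1) :=
    (measurable_from_nat (f := fun k => multichoose α (k - 1))).comp Nat.measurable_ceil
  exact Measurable.indicator (by fun_prop) measurableSet_Ioi

lemma integrableOn_stepDefect_Ioc (hα : 0 < α) : IntegrableOn (stepDefect α) (Ioc 0 1) := by
  have hrpow :
      IntegrableOn (fun τ : ℝ => (Gamma α)⁻¹ * τ ^ (α - 1) - multichoose α 0) (Ioc 0 1) := by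
    rw [← intervalIntegrable_iff_integrableOn_Ioc_of_le zero_le_one]
    exact ((intervalIntegral.intervalIntegrable_rpow' (by linarith)).const_mul _).sub
      intervalIntegrable_const
  exact hrpow.congr_fun (fun τ hτ => (stepDefect_of_mem_Ioc (k := 0) (by simpa using hτ)).symm)
    measurableSet_Ioc

lemma abs_stepDefect_le_of_mem_Ioc (hα : α ∈ Ioc (0 : ℝ) 1) {τ : ℝ} {k : ℕ} (hk : k ≠ 0)
    (hτ : τ ∈ Ioc (k : ℝ) (k + 1)) : |stepDefect α τ| ≤ (Gamma α)⁻¹ * (k : ℝ) ^ (α - 2) := by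
  have hk0 : (0 : ℝ) < k := by positivity
  have hα1 : α - 1 ≤ 0 := sub_nonpos.2 hα.2
  have hΓ : 0 < Gamma α := Gamma_pos_of_pos hα.1
  have step_le := Gamma_nat_add_div_factorial_le_rpow ⟨hα.1.le, hα.2⟩ hk
  have le_step := rpow_le_Gamma_nat_add_div_factorial hα.1 hα.2 k
  have rpow_le : τ ^ (α - 1) ≤ (k : ℝ) ^ (α - 1) := rpow_le_rpow_of_nonpos hk0 hτ.1.le hα1
  have le_rpow : ((k : ℝ) + 1) ^ (α - 1) ≤ τ ^ (α - 1) :=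
    rpow_le_rpow_of_nonpos (hk0.trans hτ.1) hτ.2 hα1
  rw [stepDefect_of_mem_Ioc hτ, multichoose_eq_Gamma_div hα.1, ← mul_sub, abs_mul,
    abs_of_pos (inv_pos.2 hΓ)]
  gcongr
  refine le_trans ?_ (rpow_sub_rpow_add_one_le hk0 hα.1.le)
  exact abs_sub_le_iff.2 ⟨by linarith, by linarith⟩

lemma abs_stepDefect_le_of_one_lt (hα : α ∈ Ioc (0 : ℝ) 1) {τ : ℝ} (hτ : 1 < τ) :
    |stepDefect α τ| ≤ (Gamma α)⁻¹ * (2⁻¹ * τ) ^ (α - 2) := by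
  obtain ⟨k, hk⟩ := Nat.exists_eq_add_one.2 (Nat.ceil_pos.2 (zero_lt_one.trans hτ))
  have hkτ : τ ∈ Ioc (k : ℝ) (k + 1) := by
    simpa using (Nat.ceil_eq_iff k.succ_ne_zero).1 hk
  have hk0 : k ≠ 0 := by
    rintro rfl
    norm_num at hkτ
    linarith [hkτ.2]
  have hk1 : (1 : ℝ) ≤ k := Nat.one_le_cast.2 (Nat.one_le_iff_ne_zero.2 hk0)
  have hΓ := (Gamma_pos_of_pos hα.1).le
  refine (abs_stepDefect_le_of_mem_Ioc hα hk0 hkτ).trans ?_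
  gcongr (Gamma α)⁻¹ * ?_
  exact rpow_le_rpow_of_nonpos (by linarith) (by linarith [hkτ.2]) (by linarith [hα.2])

lemma integrableOn_stepDefect_Ioi_one (hα : α ∈ Ioo (0 : ℝ) 1) :
    IntegrableOn (stepDefect α) (Ioi 1) := by
  have hbound : IntegrableOn (fun τ : ℝ => (Gamma α)⁻¹ * (2⁻¹ * τ) ^ (α - 2)) (Ioi 1) := by
    refine Integrable.const_mul ?_ _
    rw [← IntegrableOn,
      integrableOn_Ioi_comp_mul_left_iff (fun τ : ℝ => τ ^ (α - 2)) 1 (by norm_num)]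
    exact integrableOn_Ioi_rpow_of_lt (by linarith [hα.2]) (by norm_num)
  refine hbound.mono' (measurable_stepDefect α).aestronglyMeasurable ?_
  filter_upwards [ae_restrict_mem measurableSet_Ioi] with τ hτ
  exact abs_stepDefect_le_of_one_lt ⟨hα.1, hα.2.le⟩ hτ

lemma integrable_stepDefect (hα : α ∈ Ioo (0 : ℝ) 1) : Integrable (stepDefect α) := by
  have hIoi : IntegrableOn (stepDefect α) (Ioi 0) := by
    rw [← Ioc_union_Ioi_eq_Ioi zero_le_one]
    exact (integrableOn_stepDefect_Ioc hα.1).union (integrableOn_stepDefect_Ioi_one hα)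
  exact (integrableOn_iff_integrable_of_support_subset support_indicator_subset).1 hIoi

end StepDefect

section Kernel

variable {α : ℝ}

lemma pker_of_nonpos {τ : ℝ} (hτ : τ ≤ 0) : pker α τ = 0 := by
  simp [pker, Nat.ceil_eq_zero.2 hτ]

lemma pker_of_mem_Ioc {τ : ℝ} {m : ℕ} (hτ : τ ∈ Ioc (m : ℝ) (m + 1)) :
    pker α τ = multichoose 0 m +
      ∑ j ∈ Finset.range (m + 1), multichoose (-α) j * stepDefect α (τ - j) := by
  have hceil : ⌈τ⌉₊ = m + 1 := (Nat.ceil_eq_iff m.succ_ne_zero).2 (by simpa using hτ)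
  rw [← neg_add_cancel α, ← sum_range_succ_multichoose_mul, ← Finset.sum_add_distrib, pker, hceil,
    Finset.mul_sum]
  refine Finset.sum_congr rfl fun j hj => ?_
  have hmem : τ - j ∈ Ioc ((m - j : ℕ) : ℝ) ((m - j : ℕ) + 1) := by
    rw [Nat.cast_sub (Finset.mem_range_succ_iff.1 hj)]
    constructor <;> linarith [hτ.1, hτ.2]
  rw [stepDefect_of_mem_Ioc hmem, neg_one_pow_mul_binomR]
  ring

lemma pker_eq_indicator_add_tsum (α τ : ℝ) :
    pker α τ = (Ioc (0 : ℝ) 1).indicator 1 τ +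
      ∑' j : ℕ, multichoose (-α) j • stepDefect α (τ - j) := by
  have hsupp : ∀ j ∉ Finset.range ⌈τ⌉₊, multichoose (-α) j • stepDefect α (τ - j) = 0 := by
    intro j hj
    rw [stepDefect_of_nonpos (by simpa using hj), smul_zero]
  rw [tsum_eq_sum hsupp]
  rcases le_or_gt τ 0 with hτ | hτ
  · simp [pker_of_nonpos hτ, Nat.ceil_eq_zero.2 hτ, hτ]
  obtain ⟨m, hm⟩ := Nat.exists_eq_add_one.2 (Nat.ceil_pos.2 hτ)
  rw [pker_of_mem_Ioc (by simpa using (Nat.ceil_eq_iff m.succ_ne_zero).1 hm), hm]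
  congr 1
  have hτ1 : τ ≤ 1 ↔ m = 0 := by
    rw [← Nat.cast_one, ← Nat.ceil_le, hm]
    omega
  cases m <;> simp_all [indicator]

lemma integrable_indicator_Ioc_one : Integrable ((Ioc (0 : ℝ) 1).indicator (1 : ℝ → ℝ)) :=
  (integrableOn_const (by simp)).integrable_indicator measurableSet_Ioc

lemma integrable_pker (hα : α ∈ Ioo (0 : ℝ) 1) : Integrable (pker α) := by
  rw [funext (pker_eq_indicator_add_tsum α)]
  exact integrable_indicator_Ioc_one.add (integrable_tsum_smul_comp_sub
    (hasSum_multichoose_neg hα).summable _ (integrable_stepDefect hα))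

lemma integral_Ioi_pker (hα : α ∈ Ioo (0 : ℝ) 1) : ∫ τ in Ioi 0, pker α τ = 1 := by
  have hsum := hasSum_multichoose_neg hα
  have hE := integrable_stepDefect hα
  have hIoi : ∫ τ in Ioi 0, pker α τ = ∫ τ, pker α τ :=
    setIntegral_eq_integral_of_forall_compl_eq_zero fun τ hτ => pker_of_nonpos (notMem_Ioi.1 hτ)
  rw [hIoi]
  simp_rw [pker_eq_indicator_add_tsum]
  rw [integral_add integrable_indicator_Ioc_one (integrable_tsum_smul_comp_sub hsum.summable _ hE),
    integral_tsum_smul_comp_sub hsum.summable _ hE, hsum.tsum_eq, zero_smul, add_zero,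
    integral_indicator_one measurableSet_Ioc]
  simp

end Kernel

section UniformApproximation

variable {ι E : Type*} [NormedAddCommGroup E] {T A : ℝ} {φ : ι → ℝ → E}

lemma uniformEquicontinuousOn_coe_of_forall_norm_sub_le {W : Set (ℝ → E)} {s : Set ℝ}
    (hW : ∀ ε > 0, ∃ δ > 0, ∀ φ ∈ W, ∀ t ∈ s, ∀ τ ∈ s, |t - τ| ≤ δ → ‖φ t - φ τ‖ ≤ ε) :
    UniformEquicontinuousOn ((↑) : W → ℝ → E) s := by
  intro U hU
  obtain ⟨ε, hε, hεU⟩ := Metric.uniformity_basis_dist_le.mem_iff.1 hU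
  obtain ⟨δ, hδ, hW⟩ := hW ε hε
  filter_upwards [mem_inf_of_left (Metric.uniformity_basis_dist_le.mem_of_mem hδ),
    mem_inf_of_right (mem_principal_self _)] with x hdist hx φ
  exact hεU (by simpa [dist_eq_norm] using hW φ φ.2 x.1 hx.1 x.2 hx.2 hdist)

lemma max_zero_sub_mul_mem_Icc {t τ h : ℝ} (ht : t ∈ Icc 0 T) (hτ : 0 ≤ τ) (hh : 0 ≤ h) :
    max 0 (t - τ * h) ∈ Icc 0 T :=
  ⟨le_max_left _ _, max_le (ht.1.trans ht.2) (by nlinarith [ht.2])⟩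

lemma abs_max_zero_sub_mul_sub_le {t τ h : ℝ} (ht : 0 ≤ t) (hτ : 0 ≤ τ) (hh : 0 ≤ h) :
    |max 0 (t - τ * h) - t| ≤ τ * h := by
  have := mul_nonneg hτ hh
  rcases max_cases 0 (t - τ * h) with ⟨hmax, hle⟩ | ⟨hmax, -⟩ <;> rw [hmax, abs_le] <;>
    constructor <;> linarith

lemma eventually_fst_pos_and_mem_Icc :
    ∀ᶠ x : ℝ × ι × ℝ in 𝓝[>] 0 ×ˢ 𝓟 (univ ×ˢ Icc 0 T), 0 < x.1 ∧ x.2.2 ∈ Icc 0 T := by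
  filter_upwards [prod_mem_prod self_mem_nhdsWithin (mem_principal_self _)] with x hx
  exact ⟨hx.1, hx.2.2⟩

lemma tendsto_max_zero_sub_mul_uniformity {τ : ℝ} (hτ : 0 ≤ τ) :
    Tendsto (fun x : ℝ × ι × ℝ => (max 0 (x.2.2 - τ * x.1), x.2.2))
      (𝓝[>] 0 ×ˢ 𝓟 (univ ×ˢ Icc 0 T)) (uniformity ℝ ⊓ 𝓟 (Icc 0 T ×ˢ Icc 0 T)) := by
  have hstep : Tendsto (fun x : ℝ × ι × ℝ => τ * x.1) (𝓝[>] 0 ×ˢ 𝓟 (univ ×ˢ Icc 0 T)) (𝓝 0) := by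
    have : Tendsto (fun h : ℝ => τ * h) (𝓝[>] 0) (𝓝 0) :=
      tendsto_nhdsWithin_of_tendsto_nhds (by simpa using (continuous_const_mul τ).tendsto 0)
    exact this.comp tendsto_fst
  refine tendsto_inf.2 ⟨tendsto_uniformity_iff_dist_tendsto_zero.2 ?_, tendsto_principal.2 ?_⟩
  · refine squeeze_zero' (.of_forall fun _ => dist_nonneg) ?_ hstep
    filter_upwards [eventually_fst_pos_and_mem_Icc] with x ⟨hh, ht⟩
    exact abs_max_zero_sub_mul_sub_le ht.1 hτ hh.le
  · filter_upwards [eventually_fst_pos_and_mem_Icc] with x ⟨hh, ht⟩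
    exact ⟨max_zero_sub_mul_mem_Icc ht hτ hh.le, ht⟩

lemma tendsto_comp_max_sub_of_uniformEquicontinuousOn
    (hφ : UniformEquicontinuousOn φ (Icc 0 T)) {τ : ℝ} (hτ : 0 ≤ τ) :
    Tendsto (fun x : ℝ × ι × ℝ => φ x.2.1 (max 0 (x.2.2 - τ * x.1)) - φ x.2.1 x.2.2)
      (𝓝[>] 0 ×ˢ 𝓟 (univ ×ˢ Icc 0 T)) (𝓝 0) := by
  rw [Metric.tendsto_nhds]
  intro ε hε
  filter_upwards [(tendsto_max_zero_sub_mul_uniformity hτ).eventually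
    (hφ _ (Metric.dist_mem_uniformity hε))] with x hx
  rw [dist_zero_right, ← dist_eq_norm]
  exact hx x.2.1

variable [NormedSpace ℝ E] {p : ℝ → ℝ}

lemma intervalIntegral_smul_eq_setIntegral_max {f : ℝ → E} (hf0 : f 0 = 0) {t h : ℝ}
    (ht : 0 ≤ t) (hh : 0 < h) :
    ∫ τ in (0 : ℝ)..(t / h), p τ • f (t - τ * h) =
      ∫ τ in Ioi 0, p τ • f (max 0 (t - τ * h)) := by
  rw [intervalIntegral.integral_of_le (by positivity)]
  have hinside : ∫ τ in Ioc 0 (t / h), p τ • f (t - τ * h) =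
      ∫ τ in Ioc 0 (t / h), p τ • f (max 0 (t - τ * h)) :=
    setIntegral_congr_fun measurableSet_Ioc fun τ hτ => by
      simp only [max_eq_right (sub_nonneg.2 ((le_div_iff₀ hh).1 hτ.2))]
  rw [hinside]
  refine (setIntegral_eq_of_subset_of_forall_sdiff_eq_zero measurableSet_Ioi
    Ioc_subset_Ioi_self ?_).symm
  rintro τ ⟨hτ0, hτ⟩
  have hτh : t < τ * h := (div_lt_iff₀ hh).1 (not_le.1 fun hle => hτ ⟨hτ0, hle⟩)
  rw [max_eq_left (by linarith), hf0, smul_zero]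

lemma integrableOn_smul_comp_max {f : ℝ → E} (hp : IntegrableOn p (Ioi 0))
    (hf : ContinuousOn f (Icc 0 T)) (hfb : ∀ t ∈ Icc 0 T, ‖f t‖ ≤ A) {t h : ℝ}
    (ht : t ∈ Icc 0 T) (hh : 0 ≤ h) :
    IntegrableOn (fun τ => p τ • f (max 0 (t - τ * h))) (Ioi 0) := by
  have hmaps : MapsTo (fun τ => max 0 (t - τ * h)) (Ioi 0) (Icc 0 T) := fun τ hτ =>
    max_zero_sub_mul_mem_Icc ht (le_of_lt hτ) hh
  refine hp.smul_bdd A ?_ ?_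
  · exact (hf.comp (by fun_prop) hmaps).aestronglyMeasurable measurableSet_Ioi
  · filter_upwards [ae_restrict_mem measurableSet_Ioi] with τ hτ using hfb _ (hmaps hτ)

lemma intervalIntegral_smul_sub_eq_setIntegral [CompleteSpace E] {f : ℝ → E}
    (hp : IntegrableOn p (Ioi 0)) (hp1 : ∫ τ in Ioi 0, p τ = 1)
    (hf : ContinuousOn f (Icc 0 T)) (hfb : ∀ t ∈ Icc 0 T, ‖f t‖ ≤ A) (hf0 : f 0 = 0) {t h : ℝ}
    (ht : t ∈ Icc 0 T) (hh : 0 < h) :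
    (∫ τ in (0 : ℝ)..(t / h), p τ • f (t - τ * h)) - f t =
      ∫ τ in Ioi 0, p τ • (f (max 0 (t - τ * h)) - f t) := by
  simp_rw [smul_sub]
  rw [integral_sub (integrableOn_smul_comp_max hp hf hfb ht hh.le) (hp.smul_const _),
    integral_smul_const, hp1, one_smul, intervalIntegral_smul_eq_setIntegral_max hf0 ht.1 hh]

-- Dominated convergence along the filter `𝓝[>] 0 ×ˢ 𝓟 _` yields uniformity in `(i, t)` at once.
lemma tendsto_setIntegral_smul_comp_max_sub (hp : IntegrableOn p (Ioi 0))
    (hφb : ∀ i, ∀ t ∈ Icc 0 T, ‖φ i t‖ ≤ A) (hφe : UniformEquicontinuousOn φ (Icc 0 T)) :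
    Tendsto (fun x : ℝ × ι × ℝ =>
      ∫ τ in Ioi 0, p τ • (φ x.2.1 (max 0 (x.2.2 - τ * x.1)) - φ x.2.1 x.2.2))
      (𝓝[>] 0 ×ˢ 𝓟 (univ ×ˢ Icc 0 T)) (𝓝 0) := by
  have hφc (i : ι) : ContinuousOn (φ i) (Icc 0 T) := hφe.equicontinuousOn.continuousOn i
  rw [← integral_zero ℝ E (μ := volume.restrict (Ioi 0))]
  refine tendsto_integral_filter_of_dominated_convergence (fun τ => ‖p τ‖ * (A + A))
    ?_ ?_ (hp.norm.mul_const _) ?_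
  · filter_upwards [eventually_fst_pos_and_mem_Icc] with x ⟨hh, ht⟩
    simp_rw [smul_sub]
    exact ((integrableOn_smul_comp_max hp (hφc _) (hφb _) ht hh.le).sub
      (hp.smul_const _)).aestronglyMeasurable
  · filter_upwards [eventually_fst_pos_and_mem_Icc] with x ⟨hh, ht⟩
    filter_upwards [ae_restrict_mem measurableSet_Ioi] with τ hτ
    rw [norm_smul]
    gcongr
    exact (norm_sub_le _ _).trans (add_le_add
      (hφb _ _ (max_zero_sub_mul_mem_Icc ht (le_of_lt hτ) hh.le)) (hφb _ _ ht))
  · filter_upwards [ae_restrict_mem measurableSet_Ioi] with τ hτ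
    simpa using (tendsto_comp_max_sub_of_uniformEquicontinuousOn hφe (le_of_lt hτ)).const_smul
      (p τ)

theorem tendstoUniformlyOn_intervalIntegral_smul_comp_sub [CompleteSpace E]
    (hp : IntegrableOn p (Ioi 0)) (hp1 : ∫ τ in Ioi 0, p τ = 1) (hφ0 : ∀ i, φ i 0 = 0)
    (hφb : ∀ i, ∀ t ∈ Icc 0 T, ‖φ i t‖ ≤ A) (hφe : UniformEquicontinuousOn φ (Icc 0 T)) :
    TendstoUniformlyOn
      (fun h (x : ι × ℝ) => ∫ τ in (0 : ℝ)..(x.2 / h), p τ • φ x.1 (x.2 - τ * h))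
      (fun x => φ x.1 x.2) (𝓝[>] 0) (univ ×ˢ Icc 0 T) := by
  have hφc (i : ι) : ContinuousOn (φ i) (Icc 0 T) := hφe.equicontinuousOn.continuousOn i
  rw [tendstoUniformlyOn_iff_tendsto, uniformity_eq_comap_nhds_zero, tendsto_comap_iff]
  refine (tendsto_setIntegral_smul_comp_max_sub hp hφb hφe).congr' ?_
  filter_upwards [eventually_fst_pos_and_mem_Icc] with x ⟨hh, ht⟩
  exact (intervalIntegral_smul_sub_eq_setIntegral hp hp1 (hφc _) (hφb _) (hφ0 _) ht hh).symm

end UniformApproximation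

theorem stmt8_general {E : Type*} [NormedAddCommGroup E] [NormedSpace ℝ E] [CompleteSpace E]
    {α T A : ℝ} (hα : α ∈ Ioo (0 : ℝ) 1) {W : Set (ℝ → E)} (hW0 : ∀ φ ∈ W, φ 0 = 0)
    (hWb : ∀ φ ∈ W, ∀ t ∈ Icc (0 : ℝ) T, ‖φ t‖ ≤ A)
    (hWe : ∀ ε > (0 : ℝ), ∃ δ > (0 : ℝ), ∀ φ ∈ W, ∀ t ∈ Icc (0 : ℝ) T, ∀ τ ∈ Icc (0 : ℝ) T,
      |t - τ| ≤ δ → ‖φ t - φ τ‖ ≤ ε) :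
    ∀ ε > (0 : ℝ), ∃ hstar > (0 : ℝ), ∀ h ∈ Ioc (0 : ℝ) hstar, ∀ φ ∈ W, ∀ t ∈ Icc (0 : ℝ) T,
      ‖(∫ τ in (0 : ℝ)..(t / h), pker α τ • φ (t - τ * h)) - φ t‖ ≤ ε := by
  intro ε hε
  have hunif := tendstoUniformlyOn_intervalIntegral_smul_comp_sub
    (integrable_pker hα).integrableOn (integral_Ioi_pker hα) (fun φ : W => hW0 φ φ.2)
    (fun φ => hWb φ φ.2) (uniformEquicontinuousOn_coe_of_forall_norm_sub_le hWe)
  obtain ⟨hstar, hpos, hsub⟩ := mem_nhdsGT_iff_exists_Ioc_subset.1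
    (Metric.tendstoUniformlyOn_iff.1 hunif ε hε)
  refine ⟨hstar, hpos, fun h hh φ hφ t ht => ?_⟩
  rw [← dist_eq_norm, dist_comm]
  exact (hsub hh (⟨φ, hφ⟩, t) ⟨mem_univ _, ht⟩).le

theorem stmt8 (α T : ℝ) (hα : α ∈ Ioo (0:ℝ) 1) (hT : 0 < T) (n : ℕ)
    (W : Set (ℝ → Evec n))
    (hWc : ∀ φ ∈ W, ContinuousOn φ (Icc (0:ℝ) T))
    (hW0 : ∀ φ ∈ W, φ 0 = 0)
    (A : ℝ) (hWb : ∀ φ ∈ W, ∀ t ∈ Icc (0:ℝ) T, ‖φ t‖ ≤ A)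
    (hWe : ∀ ε > (0:ℝ), ∃ δ > (0:ℝ), ∀ φ ∈ W, ∀ t ∈ Icc (0:ℝ) T, ∀ τ ∈ Icc (0:ℝ) T,
      |t - τ| ≤ δ → ‖φ t - φ τ‖ ≤ ε) :
    ∀ ε > (0:ℝ), ∃ hstar > (0:ℝ), ∀ h ∈ Ioc (0:ℝ) hstar, ∀ φ ∈ W, ∀ t ∈ Icc (0:ℝ) T,
      ‖(∫ τ in (0:ℝ)..(t / h), pker α τ • φ (t - τ * h)) - φ t‖ ≤ ε :=
  stmt8_general hα hW0 hWb hWe
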